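/- For every n, the function of two variables (x,h) ↦ Tr( h* · D log(x) h ) is jointly convex, where x ranges over n×n positive definite complex matrices, h ranges over all n×n complex matrices, and D log(x) denotes the Fréchet differential at x of the matrix logarithm x ↦ log x defined by the functional calculus. That is, for positive definite x, y, arbitrary h, k, and t ∈ [0,1], Tr( (th+(1−t)k)* · D log(tx+(1−t)y)(th+(1−t)k) ) ≤ t·Tr( h* · D log(x) h ) + (1−t)·Tr( k* · D log(y) k ). -/

import Mathlib

open Matrix
open scoped ComplexOrder

attribute [local instance] Matrix.normedAddCommGroup Matrix.normedSpace

/-- The matrix function induced by `f : ℝ → ℝ` via the functional calculus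
(defined to be `0` on non-Hermitian matrices). -/
noncomputable def matFun {m : Type*} [Fintype m] [DecidableEq m] (f : ℝ → ℝ)
    (x : Matrix m m ℂ) : Matrix m m ℂ :=
  if hx : x.IsHermitian then
    (hx.eigenvectorUnitary : Matrix m m ℂ) *
      Matrix.diagonal (fun i => (f (hx.eigenvalues i) : ℂ)) *
      star (hx.eigenvectorUnitary : Matrix m m ℂ)
  else 0

/-- `D` is the (complex-linear extension of the) Fréchet differential at `x` of the matrix
function induced by `f`, the differential being taken within the real subspace of
Hermitian matrices. -/
noncomputable def IsFDerivMatFun {m : Type*} [Fintype m] [DecidableEq m] (f : ℝ → ℝ)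
    (x : Matrix m m ℂ) (D : Matrix m m ℂ →L[ℂ] Matrix m m ℂ) : Prop :=
  HasFDerivWithinAt (matFun f) (D.restrictScalars ℝ) {y : Matrix m m ℂ | y.IsHermitian} x

/-- `f : (0,∞) → ℝ` (given together with its derivative `f'`) is a matrix entropy:
it is twice continuously differentiable and for every `n` the map
`(x, h) ↦ Tr (h* ⬝ (Df' x) h)` is jointly convex in pairs `(x, h)` of an `n × n`
positive definite matrix `x` and an arbitrary `n × n` matrix `h`. -/
noncomputable def IsMatrixEntropy (f f' : ℝ → ℝ) : Prop :=
  ContDiffOn ℝ 2 f (Set.Ioi 0) ∧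
  (∀ t ∈ Set.Ioi (0 : ℝ), HasDerivAt f (f' t) t) ∧
  ∀ (n : ℕ)
    (D : Matrix (Fin n) (Fin n) ℂ → (Matrix (Fin n) (Fin n) ℂ →L[ℂ] Matrix (Fin n) (Fin n) ℂ)),
    (∀ x : Matrix (Fin n) (Fin n) ℂ, x.PosDef → IsFDerivMatFun f' x (D x)) →
    ConvexOn ℝ {q : Matrix (Fin n) (Fin n) ℂ × Matrix (Fin n) (Fin n) ℂ | q.1.PosDef}
      (fun q => (Matrix.trace (q.2ᴴ * (D q.1) q.2)).re)

/-- The partial trace over the second tensor factor. -/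
noncomputable def ptrace {ι₁ ι₂ : Type*} [Fintype ι₂]
    (ρ : Matrix (ι₁ × ι₂) (ι₁ × ι₂) ℂ) : Matrix ι₁ ι₁ ℂ :=
  Matrix.of fun i j => ∑ k : ι₂, ρ (i, k) (j, k)

/-!
In an eigenbasis of `x`, the differential `D log(x)` multiplies the `(i, j)` entry by the divided
difference of `log` at the eigenvalues `λ i` and `λ j` (Daleckii–Krein). To see this, differentiate
`log ∘ exp = id`: the derivative of `exp` at `log x` is explicit on commutators with `log x` and on
matrices commuting with `log x`, and these span all matrices.

The divided difference of `log` at `a` and `b` is `∫ s in 0..1, ((1 - s) a + s b)⁻¹`, so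
`Tr (h* ⬝ D log(x) h)` is an integral over `s` of the forms `Tr (h* ⬝ L⁻¹ h)`, where `L` is the
positive operator `k ↦ (1 - s) x k + s k x`. Completing the square,
`Tr (h* ⬝ L⁻¹ h) = max_k (2 Re Tr (k* ⬝ h) - Tr (k* ⬝ L k))`. For fixed `k` the right-hand side is
linear in `(x, h)`, so its maximum is jointly convex, and so is the integral.
-/

lemma convexOn_of_isLUB {E ι : Type*} [AddCommMonoid E] [SMul ℝ E] {s : Set E}
    (hs : Convex ℝ s) {f : ι → E → ℝ} (hf : ∀ i, ConvexOn ℝ s (f i)) {g : E → ℝ}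
    (hg : ∀ z ∈ s, IsLUB (Set.range fun i => f i z) (g z)) : ConvexOn ℝ s g := by
  refine ⟨hs, fun y hy z hz a b ha hb hab => (hg _ (hs hy hz ha hb hab)).2 ?_⟩
  rintro _ ⟨i, rfl⟩
  calc f i (a • y + b • z) ≤ a • f i y + b • f i z := (hf i).2 hy hz ha hb hab
    _ ≤ a • g y + b • g z := by
      gcongr
      · exact (hg y hy).1 ⟨i, rfl⟩
      · exact (hg z hz).1 ⟨i, rfl⟩

lemma convex_setOf_posDef_fst {m 𝕜 E : Type*} [RCLike 𝕜] [AddCommMonoid E] [Module ℝ E] :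
    Convex ℝ {z : Matrix m m 𝕜 × E | z.1.PosDef} :=
  convex_iff_forall_pos.mpr fun _ hx _ hy _ _ ha hb _ =>
    (Matrix.PosDef.smul hx ha).add (Matrix.PosDef.smul hy hb)

lemma mul_add_mul_pos {R : Type*} [Semiring R] [LinearOrder R] [IsStrictOrderedRing R]
    {a b p q : R} (ha : 0 < a) (hb : 0 < b) (hp : 0 ≤ p) (hq : 0 ≤ q)
    (hpq : 0 < p + q) : 0 < p * a + q * b := by
  rcases hp.eq_or_lt with rfl | hp_pos
  · rw [zero_add] at hpq
    positivity
  · positivity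

lemma two_mul_re_star_mul_sub_le {w : ℝ} (hw : 0 < w) (z y : ℂ) :
    2 * (star z * y).re - w * (star z * z).re ≤ w⁻¹ * (star y * y).re := by
  have completed_square : w⁻¹ * (star y * y).re - (2 * (star z * y).re - w * (star z * z).re) =
      w⁻¹ * Complex.normSq (y - w * z) := by
    simp only [RCLike.star_def, Complex.mul_re, Complex.conj_re, Complex.conj_im, neg_mul,
      sub_neg_eq_add, Complex.normSq_apply, Complex.sub_re, Complex.ofReal_re, Complex.ofReal_im,
      zero_mul, sub_zero, Complex.sub_im, Complex.mul_im, add_zero]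
    field_simp
    ring
  have := mul_nonneg (inv_nonneg.mpr hw.le) (Complex.normSq_nonneg (y - w * z))
  linarith

lemma re_trace_conjTranspose_mul_comm {m n : Type*} [Fintype m] [Fintype n]
    (k h : Matrix m n ℂ) : (kᴴ * h).trace.re = (hᴴ * k).trace.re := by
  rw [← Complex.conj_re, starRingEnd_apply, ← Matrix.trace_conjTranspose,
    Matrix.conjTranspose_mul, Matrix.conjTranspose_conjTranspose]

section HermiteGenocchi

open MeasureTheory Set

lemma continuousOn_comp_segment {X : Type*} [TopologicalSpace X] {f : ℝ → X} {a b : ℝ}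
    (hf : ContinuousOn f (segment ℝ a b)) :
    ContinuousOn (fun s : ℝ => f ((1 - s) * a + s * b)) (Icc 0 1) :=
  hf.comp (by fun_prop) fun s hs => segment_eq_image ℝ a b ▸ mem_image_of_mem _ hs

lemma integral_comp_segment_eq_dslope {E : Type*} [NormedAddCommGroup E] [NormedSpace ℝ E]
    [CompleteSpace E] {f f' : ℝ → E} {a b : ℝ}
    (hf : ∀ z ∈ segment ℝ a b, HasDerivAt f (f' z) z) (hf' : ContinuousOn f' (segment ℝ a b)) :
    ∫ s in (0 : ℝ)..1, f' ((1 - s) * a + s * b) = dslope f a b := by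
  have line_eq (s : ℝ) : (1 - s) * a + s * b = a + s • (b - a) := by
    rw [smul_eq_mul]
    ring
  have cont := continuousOn_comp_segment hf'
  simp only [line_eq] at cont ⊢
  have ftc : (b - a) • ∫ s in (0 : ℝ)..1, f' (a + s • (b - a)) = f (a + (b - a)) - f a :=
    intervalIntegral.integral_unitInterval_deriv_eq_sub cont fun s hs => hf _ <| by
      rw [segment_eq_image']
      exact mem_image_of_mem _ hs
  rcases eq_or_ne b a with rfl | hab
  · simp [(hf b (left_mem_segment ℝ b b)).deriv]
  · rw [dslope_of_ne _ hab, slope_def_module, eq_inv_smul_iff₀ (sub_ne_zero.mpr hab), ftc,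
      add_sub_cancel]

lemma ne_zero_of_mem_segment {a b : ℝ} (ha : 0 < a) (hb : 0 < b) {z : ℝ}
    (hz : z ∈ segment ℝ a b) : z ≠ 0 :=
  ((convex_Ioi 0).segment_subset ha hb hz).ne'

lemma integral_inv_segment {a b : ℝ} (ha : 0 < a) (hb : 0 < b) :
    ∫ s in Ioc (0 : ℝ) 1, ((1 - s) * a + s * b)⁻¹ = dslope Real.log a b := by
  rw [← intervalIntegral.integral_of_le zero_le_one]
  exact integral_comp_segment_eq_dslope
    (fun _ hz => Real.hasDerivAt_log (ne_zero_of_mem_segment ha hb hz))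
    (continuousOn_inv₀.mono fun _ => ne_zero_of_mem_segment ha hb)

lemma integrableOn_inv_segment {a b : ℝ} (ha : 0 < a) (hb : 0 < b) :
    IntegrableOn (fun s : ℝ => ((1 - s) * a + s * b)⁻¹) (Ioc 0 1) :=
  (continuousOn_comp_segment (continuousOn_inv₀.mono fun _ =>
    ne_zero_of_mem_segment ha hb)).integrableOn_Icc.mono_set Ioc_subset_Icc_self

end HermiteGenocchi

section Exponential

open NormedSpace

variable {𝕂 A : Type*} [RCLike 𝕂] [NormedRing A] [NormedAlgebra 𝕂 A] [CompleteSpace A]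

lemma hasFDerivAt_exp_fderiv (a : A) : HasFDerivAt exp (fderiv 𝕂 exp a) a :=
  (exp_analytic a).differentiableAt.hasFDerivAt

-- Differentiate `exp (e ^ (τ c) a e ^ (-τ c)) = e ^ (τ c) (exp a) e ^ (-τ c)` at `τ = 0`.
lemma fderiv_exp_apply_commutator (a c : A) :
    fderiv 𝕂 exp a (c * a - a * c) = c * exp a - exp a * c := by
  let +nondep : NormedAlgebra ℚ A := .restrictScalars ℚ 𝕂 A
  have hasDerivAt_conj (z : A) :
      HasDerivAt (fun τ : 𝕂 => exp (τ • c) * z * exp (τ • -c)) (c * z - z * c) 0 :=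
    (((hasDerivAt_exp_smul_const c (0 : 𝕂)).mul_const z).mul
      (hasDerivAt_exp_smul_const (-c) (0 : 𝕂))).congr_deriv (by simp [sub_eq_add_neg])
  have exp_conj (τ : 𝕂) :
      exp (exp (τ • c) * a * exp (τ • -c)) = exp (τ • c) * exp a * exp (τ • -c) := by
    let +nondep := invertibleExp (τ • c)
    simpa only [val_unitOfInvertible, val_inv_unitOfInvertible, invOf_exp, smul_neg]
      using exp_units_conj (unitOfInvertible (exp (τ • c))) a
  have hasDerivAt_exp_conj :=
    (hasFDerivAt_exp_fderiv (𝕂 := 𝕂) a).comp_hasDerivAt_of_eq 0 (hasDerivAt_conj a) (by simp)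
  simp only [Function.comp_def, exp_conj] at hasDerivAt_exp_conj
  exact hasDerivAt_exp_conj.unique (hasDerivAt_conj (exp a))

lemma fderiv_exp_apply_of_commute {a b : A} (hab : Commute a b) :
    fderiv 𝕂 exp a b = exp a * b := by
  let +nondep : NormedAlgebra ℚ A := .restrictScalars ℚ 𝕂 A
  have hasDerivAt_line : HasDerivAt (fun τ : 𝕂 => a + τ • b) b 0 := by
    simpa using ((hasDerivAt_id (0 : 𝕂)).smul_const b).const_add a
  have hasDerivAt_exp_line :=
    (hasFDerivAt_exp_fderiv (𝕂 := 𝕂) a).comp_hasDerivAt_of_eq 0 hasDerivAt_line (by simp)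
  simp only [Function.comp_def, NormedSpace.exp_add_of_commute (hab.smul_right _)]
    at hasDerivAt_exp_line
  simpa using hasDerivAt_exp_line.unique
    ((hasDerivAt_exp_smul_const b (0 : 𝕂)).const_mul (exp a))

end Exponential

variable {m : Type*} [Fintype m] [DecidableEq m]

lemma matFun_eq_cfc (f : ℝ → ℝ) {x : Matrix m m ℂ} (hx : x.IsHermitian) :
    matFun f x = cfc f x := by
  rw [matFun, dif_pos hx, hx.cfc_eq]
  rfl

lemma isHermitian_matFun (f : ℝ → ℝ) (x : Matrix m m ℂ) : (matFun f x).IsHermitian := by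
  by_cases hx : x.IsHermitian
  · rw [matFun_eq_cfc f hx]
    exact cfc_predicate f x
  · rw [matFun, dif_neg hx]
    exact Matrix.isHermitian_zero

lemma matFun_eq_conjStarAlgAut {x : Matrix m m ℂ} (hx : x.IsHermitian) (f : ℝ → ℝ) :
    matFun f x = Unitary.conjStarAlgAut ℂ _ hx.eigenvectorUnitary
      (.diagonal fun i => (f (hx.eigenvalues i) : ℂ)) :=
  dif_pos hx

lemma matFun_id {x : Matrix m m ℂ} (hx : x.IsHermitian) : matFun id x = x :=
  (matFun_eq_conjStarAlgAut hx id).trans hx.spectral_theorem.symm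

section MatrixExponential

open NormedSpace
open scoped Matrix.Norms.Operator MatrixOrder

lemma matFun_log_exp {a : Matrix m m ℂ} (ha : a.IsHermitian) : matFun Real.log (exp a) = a :=
  (matFun_eq_cfc _ ha.exp).trans <|
    @CFC.log_exp (Matrix m m ℂ) Matrix.linftyOpNormedRing _ Matrix.linftyOpNormedAlgebra
      Matrix.IsHermitian.instContinuousFunctionalCalculus a ha

lemma exp_matFun_log {x : Matrix m m ℂ} (hx : x.PosDef) : exp (matFun Real.log x) = x :=
  (congrArg exp (matFun_eq_cfc _ hx.1)).trans <|
    @CFC.exp_log (Matrix m m ℂ) Matrix.linftyOpNormedRing _ Matrix.linftyOpNormedAlgebra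
      Matrix.IsHermitian.instContinuousFunctionalCalculus _ _ _ x hx.isStrictlyPositive

variable {D : Matrix m m ℂ →L[ℂ] Matrix m m ℂ}

namespace IsFDerivMatFun

lemma log_apply_fderiv_exp {a : Matrix m m ℂ} (ha : a.IsHermitian)
    (hD : IsFDerivMatFun Real.log (exp a) D) (k : Matrix m m ℂ) :
    D (fderiv ℂ exp a k) = k := by
  suffices h : D.toLinearMap ∘ₗ (fderiv ℂ exp a).toLinearMap = LinearMap.id from
    LinearMap.congr_fun h k
  refine LinearMap.ext_on span_selfAdjoint fun b (hb : b.IsHermitian) => ?_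
  have isHermitian_line (τ : ℝ) : (a + τ • b).IsHermitian :=
    ha.add (hb.smul (IsSelfAdjoint.all τ))
  have hasDerivAt_line : HasDerivAt (fun τ : ℝ => a + τ • b) b 0 := by
    simpa only [one_smul] using! ((hasDerivAt_id (0 : ℝ)).smul_const b).const_add a
  have line_zero : a = a + (0 : ℝ) • b := by rw [zero_smul, add_zero]
  have hasDerivAt_exp_line := ((hasFDerivAt_exp_fderiv (𝕂 := ℂ) a).restrictScalars ℝ
    ).comp_hasDerivAt_of_eq 0 hasDerivAt_line line_zero
  have hasDerivAt_log_exp_line := HasFDerivWithinAt.comp_hasDerivAt_of_eq (0 : ℝ) hD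
    hasDerivAt_exp_line (.of_forall fun τ => (isHermitian_line τ).exp) (congrArg exp line_zero)
  have log_exp_line : matFun Real.log ∘ exp ∘ (fun τ : ℝ => a + τ • b) = fun τ => a + τ • b :=
    funext fun τ => matFun_log_exp (isHermitian_line τ)
  exact (log_exp_line ▸ hasDerivAt_log_exp_line).unique hasDerivAt_line

variable {x : Matrix m m ℂ}

lemma log_apply_commutator (hx : x.PosDef) (hD : IsFDerivMatFun Real.log x D)
    (c : Matrix m m ℂ) :
    D (c * x - x * c) = c * matFun Real.log x - matFun Real.log x * c := by
  set a := matFun Real.log x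
  have exp_a : exp a = x := exp_matFun_log hx
  calc D (c * x - x * c) = D (c * exp a - exp a * c) := by rw [exp_a]
    _ = D (fderiv ℂ exp a (c * a - a * c)) :=
      congrArg D (fderiv_exp_apply_commutator (𝕂 := ℂ) a c).symm
    _ = c * a - a * c :=
      log_apply_fderiv_exp (isHermitian_matFun _ _) (exp_a.symm ▸ hD) _

lemma log_apply_mul_of_commute (hx : x.PosDef) (hD : IsFDerivMatFun Real.log x D)
    {b : Matrix m m ℂ} (hb : Commute (matFun Real.log x) b) : D (x * b) = b := by
  set a := matFun Real.log x
  have exp_a : exp a = x := exp_matFun_log hx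
  calc D (x * b) = D (exp a * b) := by rw [exp_a]
    _ = D (fderiv ℂ exp a b) := congrArg D (fderiv_exp_apply_of_commute (𝕂 := ℂ) hb).symm
    _ = b := log_apply_fderiv_exp (isHermitian_matFun _ _) (exp_a.symm ▸ hD) b

end IsFDerivMatFun

end MatrixExponential

section DoubleOperator

/-- The double operator `h ↦ ∑ w(a, b) P_a h P_b`, where `a` and `b` range over the spectrum of `x`
and `P_a` denotes a spectral projection of `x`; in an eigenbasis of `x` it is the Hadamard product
with the matrix of weights. As for `matFun`, the value at a non-Hermitian `x` is `0`. -/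
noncomputable def doubleOperator (w : ℝ → ℝ → ℝ) (x h : Matrix m m ℂ) : Matrix m m ℂ :=
  if hx : x.IsHermitian then
    Unitary.conjStarAlgAut ℂ _ hx.eigenvectorUnitary
      (.of fun i j => w (hx.eigenvalues i) (hx.eigenvalues j) •
        (Unitary.conjStarAlgAut ℂ _ hx.eigenvectorUnitary).symm h i j)
  else 0

variable {x : Matrix m m ℂ}

lemma doubleOperator_of_isHermitian (hx : x.IsHermitian) (w : ℝ → ℝ → ℝ) (h : Matrix m m ℂ) :
    doubleOperator w x h = Unitary.conjStarAlgAut ℂ _ hx.eigenvectorUnitary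
      (.of fun i j => w (hx.eigenvalues i) (hx.eigenvalues j) •
        (Unitary.conjStarAlgAut ℂ _ hx.eigenvectorUnitary).symm h i j) :=
  dif_pos hx

lemma doubleOperator_add (hx : x.IsHermitian) (w w' : ℝ → ℝ → ℝ) (h : Matrix m m ℂ) :
    doubleOperator (w + w') x h = doubleOperator w x h + doubleOperator w' x h := by
  simp only [doubleOperator_of_isHermitian hx, ← map_add, Pi.add_apply, add_smul]
  rfl

lemma doubleOperator_doubleOperator (hx : x.IsHermitian) (w w' : ℝ → ℝ → ℝ)
    (h : Matrix m m ℂ) :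
    doubleOperator w x (doubleOperator w' x h) = doubleOperator (w * w') x h := by
  simp only [doubleOperator_of_isHermitian hx, StarAlgEquiv.symm_apply_apply, Matrix.of_apply,
    smul_smul, Pi.mul_apply]

lemma doubleOperator_congr {w w' : ℝ → ℝ → ℝ}
    (hw : ∀ a ∈ spectrum ℝ x, ∀ b ∈ spectrum ℝ x, w a b = w' a b) (h : Matrix m m ℂ) :
    doubleOperator w x h = doubleOperator w' x h := by
  by_cases hx : x.IsHermitian
  · simp only [doubleOperator_of_isHermitian hx,
      hw _ (hx.eigenvalues_mem_spectrum_real _) _ (hx.eigenvalues_mem_spectrum_real _)]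
  · simp only [doubleOperator, dif_neg hx]

lemma doubleOperator_one (hx : x.IsHermitian) (h : Matrix m m ℂ) : doubleOperator 1 x h = h := by
  simp only [doubleOperator_of_isHermitian hx, Pi.one_apply, one_smul]
  exact StarAlgEquiv.apply_symm_apply _ h

lemma doubleOperator_linearCombination (hx : x.IsHermitian) (f : ℝ → ℝ) (p q : ℝ)
    (h : Matrix m m ℂ) :
    doubleOperator (fun a b => p * f a + q * f b) x h =
      p • (matFun f x * h) + q • (h * matFun f x) := by
  set φ := Unitary.conjStarAlgAut ℂ _ hx.eigenvectorUnitary with hφ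
  obtain ⟨g, rfl⟩ : ∃ g, φ g = h := ⟨_, φ.apply_symm_apply h⟩
  rw [doubleOperator_of_isHermitian hx, matFun_eq_conjStarAlgAut hx, ← hφ, φ.symm_apply_apply,
    ← map_mul, ← map_mul]
  simp only [← Complex.coe_smul, ← map_smul, ← map_add]
  congr 1
  ext i j
  simp only [Complex.ofReal_add, Complex.ofReal_mul, smul_eq_mul, of_apply, Complex.coe_smul,
    Matrix.add_apply, Matrix.smul_apply, diagonal_mul, Complex.real_smul, mul_diagonal]
  ring

lemma trace_conjTranspose_mul_doubleOperator (hx : x.IsHermitian) (w : ℝ → ℝ → ℝ)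
    (k h : Matrix m m ℂ) :
    (kᴴ * doubleOperator w x h).trace = ∑ i, ∑ j, w (hx.eigenvalues i) (hx.eigenvalues j) •
      (star ((Unitary.conjStarAlgAut ℂ _ hx.eigenvectorUnitary).symm k i j) *
        (Unitary.conjStarAlgAut ℂ _ hx.eigenvectorUnitary).symm h i j) := by
  set φ := Unitary.conjStarAlgAut ℂ _ hx.eigenvectorUnitary with hφ
  have trace_φ (g : Matrix m m ℂ) : (φ g).trace = g.trace := by
    rw [hφ, Unitary.conjStarAlgAut_apply, Matrix.trace_mul_cycle, Unitary.coe_star_mul_self,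
      Matrix.one_mul]
  obtain ⟨k, rfl⟩ : ∃ g, φ g = k := ⟨_, φ.apply_symm_apply k⟩
  rw [doubleOperator_of_isHermitian hx, ← Matrix.star_eq_conjTranspose, ← hφ, φ.symm_apply_apply,
    ← map_star, ← map_mul, trace_φ, Matrix.trace, Finset.sum_comm]
  simp [Matrix.mul_apply, mul_left_comm]

end DoubleOperator

section DaleckiiKrein

variable {D : Matrix m m ℂ →L[ℂ] Matrix m m ℂ} {x : Matrix m m ℂ}

lemma mul_matFun_sub_matFun_mul (hx : x.IsHermitian) (f : ℝ → ℝ) (h : Matrix m m ℂ) :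
    h * matFun f x - matFun f x * h = doubleOperator (fun a b => f b - f a) x h := by
  simpa [neg_add_eq_sub] using (doubleOperator_linearCombination hx f (-1) 1 h).symm

lemma matFun_mul (hx : x.IsHermitian) (f : ℝ → ℝ) (h : Matrix m m ℂ) :
    matFun f x * h = doubleOperator (fun a _ => f a) x h := by
  simpa using (doubleOperator_linearCombination hx f 1 0 h).symm

lemma mul_matFun (hx : x.IsHermitian) (f : ℝ → ℝ) (h : Matrix m m ℂ) :
    h * matFun f x = doubleOperator (fun _ b => f b) x h := by
  simpa using (doubleOperator_linearCombination hx f 0 1 h).symm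

open scoped MatrixOrder in
lemma pos_of_mem_spectrum (hx : x.PosDef) {a : ℝ} (ha : a ∈ spectrum ℝ x) : 0 < a :=
  hx.isStrictlyPositive.spectrum_pos ha

namespace IsFDerivMatFun

lemma log_apply_eq_doubleOperator (hx : x.PosDef) (hD : IsFDerivMatFun Real.log x D)
    (h : Matrix m m ℂ) : D h = doubleOperator (dslope Real.log) x h := by
  -- Split `h = x * k + [g, x]` with `k` commuting with `x`; the weight of `g` vanishes on the
  -- diagonal because `0⁻¹ = 0`.
  let δ : ℝ → ℝ → ℝ := fun a b => if a = b then a⁻¹ else 0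
  let k := doubleOperator δ x h
  let g := doubleOperator (fun a b => (b - a)⁻¹) x h
  have h_eq : x * k + (g * x - x * g) = h := by
    nth_rewrite 1 2 3 [← matFun_id hx.1]
    rw [matFun_mul hx.1, mul_matFun_sub_matFun_mul hx.1, doubleOperator_doubleOperator hx.1,
      doubleOperator_doubleOperator hx.1, ← doubleOperator_add hx.1]
    refine (doubleOperator_congr (fun a ha b _ => ?_) h).trans (doubleOperator_one hx.1 h)
    have ha_pos := pos_of_mem_spectrum hx ha
    rcases eq_or_ne a b with rfl | hab
    · simp [δ, ha_pos.ne']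
    · simp [δ, hab, sub_ne_zero.mpr hab.symm]
  have commute_k : Commute (matFun Real.log x) k := by
    rw [commute_iff_eq, matFun_mul hx.1, mul_matFun hx.1, doubleOperator_doubleOperator hx.1,
      doubleOperator_doubleOperator hx.1]
    congr 1
    ext a b
    rcases eq_or_ne a b with rfl | hab
    · rfl
    · simp [δ, hab]
  calc D h = D (x * k) + D (g * x - x * g) := by rw [← map_add, h_eq]
    _ = k + (g * matFun Real.log x - matFun Real.log x * g) := by
      rw [hD.log_apply_mul_of_commute hx commute_k, hD.log_apply_commutator hx]
    _ = doubleOperator (dslope Real.log) x h := by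
      rw [mul_matFun_sub_matFun_mul hx.1, doubleOperator_doubleOperator hx.1,
        ← doubleOperator_add hx.1]
      congr 1
      ext a b
      rcases eq_or_ne a b with rfl | hab
      · simp [δ]
      · simp [δ, hab, dslope_of_ne _ hab.symm, slope_def_field, div_eq_mul_inv]

end IsFDerivMatFun

end DaleckiiKrein

section Variational

lemma isGreatest_re_trace_doubleOperator_inv {x : Matrix m m ℂ} (hx : x.IsHermitian)
    {w : ℝ → ℝ → ℝ} (hw : ∀ a ∈ spectrum ℝ x, ∀ b ∈ spectrum ℝ x, 0 < w a b)
    (h : Matrix m m ℂ) :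
    IsGreatest (Set.range fun k : Matrix m m ℂ =>
        2 * (kᴴ * h).trace.re - (kᴴ * doubleOperator w x k).trace.re)
      (hᴴ * doubleOperator w⁻¹ x h).trace.re := by
  refine ⟨⟨doubleOperator w⁻¹ x h, ?_⟩, ?_⟩
  · have inv_apply : doubleOperator w x (doubleOperator w⁻¹ x h) = h := by
      rw [doubleOperator_doubleOperator hx]
      refine (doubleOperator_congr (fun a ha b hb => ?_) h).trans (doubleOperator_one hx h)
      exact mul_inv_cancel₀ (hw a ha b hb).ne'
    simp only [inv_apply, re_trace_conjTranspose_mul_comm _ h]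
    ring
  · rintro _ ⟨k, rfl⟩
    dsimp only
    nth_rewrite 1 [← doubleOperator_one hx h]
    simp only [trace_conjTranspose_mul_doubleOperator hx, Complex.re_sum, Finset.mul_sum,
      ← Finset.sum_sub_distrib]
    refine Finset.sum_le_sum fun i _ => Finset.sum_le_sum fun j _ => ?_
    simpa using two_mul_re_star_mul_sub_le (hw _ (hx.eigenvalues_mem_spectrum_real i) _
      (hx.eigenvalues_mem_spectrum_real j)) _ _

lemma convexOn_re_trace_doubleOperator_inv {p q : ℝ} (hp : 0 ≤ p) (hq : 0 ≤ q)
    (hpq : 0 < p + q) :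
    ConvexOn ℝ {z : Matrix m m ℂ × Matrix m m ℂ | z.1.PosDef}
      (fun z => (z.2ᴴ * doubleOperator (fun a b => p * a + q * b)⁻¹ z.1 z.2).trace.re) := by
  let f (k : Matrix m m ℂ) (z : Matrix m m ℂ × Matrix m m ℂ) : ℝ :=
    2 * (kᴴ * z.2).trace.re - (kᴴ * (p • (z.1 * k) + q • (k * z.1))).trace.re
  have isLinearMap_f (k : Matrix m m ℂ) : IsLinearMap ℝ (f k) :=
    { map_add y z := by
        simp only [f, Prod.fst_add, Prod.snd_add, mul_add, add_mul, smul_add, trace_add,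
          Complex.add_re]
        ring
      map_smul c z := by
        simp only [f, mul_add, Matrix.mul_smul, Matrix.smul_mul, trace_add, trace_smul,
          Complex.smul_re, Complex.add_re, Prod.smul_snd, Prod.smul_fst, smul_eq_mul]
        ring }
  refine convexOn_of_isLUB convex_setOf_posDef_fst
    (fun k => ((isLinearMap_f k).mk' _).convexOn convex_setOf_posDef_fst) ?_
  rintro ⟨x, h⟩ (hx : x.PosDef)
  have weight_pos : ∀ a ∈ spectrum ℝ x, ∀ b ∈ spectrum ℝ x, 0 < p * a + q * b := fun a ha b hb =>
    mul_add_mul_pos (pos_of_mem_spectrum hx ha) (pos_of_mem_spectrum hx hb) hp hq hpq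
  have f_eq (k : Matrix m m ℂ) : f k (x, h) = 2 * (kᴴ * h).trace.re -
      (kᴴ * doubleOperator (fun a b => p * a + q * b) x k).trace.re := by
    have sylvester := doubleOperator_linearCombination hx.1 id p q k
    simp only [matFun_id hx.1, id] at sylvester
    simp only [f, sylvester]
  simpa only [IsLinearMap.mk'_apply, f_eq]
    using (isGreatest_re_trace_doubleOperator_inv hx.1 weight_pos h).isLUB

end Variational

section IntegralRepresentation

open MeasureTheory

variable {α : Type*} [MeasurableSpace α] {μ : Measure α} {w : α → ℝ → ℝ → ℝ}
  {x : Matrix m m ℂ}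

lemma integrable_re_trace_doubleOperator (hx : x.IsHermitian)
    (hw : ∀ a ∈ spectrum ℝ x, ∀ b ∈ spectrum ℝ x, Integrable (fun s => w s a b) μ)
    (k h : Matrix m m ℂ) : Integrable (fun s => (kᴴ * doubleOperator (w s) x h).trace.re) μ := by
  simp only [trace_conjTranspose_mul_doubleOperator hx, Complex.re_sum, Complex.smul_re]
  exact integrable_finsetSum _ fun i _ => integrable_finsetSum _ fun j _ =>
    (hw _ (hx.eigenvalues_mem_spectrum_real i) _ (hx.eigenvalues_mem_spectrum_real j)).smul_const _

lemma integral_re_trace_doubleOperator (hx : x.IsHermitian)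
    (hw : ∀ a ∈ spectrum ℝ x, ∀ b ∈ spectrum ℝ x, Integrable (fun s => w s a b) μ)
    (k h : Matrix m m ℂ) : ∫ s, (kᴴ * doubleOperator (w s) x h).trace.re ∂μ =
      (kᴴ * doubleOperator (fun a b => ∫ s, w s a b ∂μ) x h).trace.re := by
  have integrable_term (i j : m) (c : ℝ) :=
    (hw _ (hx.eigenvalues_mem_spectrum_real i) _ (hx.eigenvalues_mem_spectrum_real j)).smul_const c
  simp only [trace_conjTranspose_mul_doubleOperator hx, Complex.re_sum, Complex.smul_re]
  rw [integral_finsetSum _ fun i _ => integrable_finsetSum _ fun j _ => integrable_term i j _]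
  refine Finset.sum_congr rfl fun i _ => ?_
  rw [integral_finsetSum _ fun j _ => integrable_term i j _]
  exact Finset.sum_congr rfl fun j _ => integral_smul_const _ _

lemma integrableOn_re_trace_doubleOperator_inv (hx : x.PosDef) (k h : Matrix m m ℂ) :
    IntegrableOn (fun s : ℝ =>
      (kᴴ * doubleOperator (fun a b => (1 - s) * a + s * b)⁻¹ x h).trace.re) (Set.Ioc 0 1) :=
  integrable_re_trace_doubleOperator hx.1 (fun _ ha _ hb =>
    integrableOn_inv_segment (pos_of_mem_spectrum hx ha) (pos_of_mem_spectrum hx hb)) k h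

lemma IsFDerivMatFun.re_trace_log_apply_eq_integral {D : Matrix m m ℂ →L[ℂ] Matrix m m ℂ}
    (hx : x.PosDef) (hD : IsFDerivMatFun Real.log x D) (k h : Matrix m m ℂ) :
    (kᴴ * D h).trace.re = ∫ s in Set.Ioc (0 : ℝ) 1,
      (kᴴ * doubleOperator (fun a b => (1 - s) * a + s * b)⁻¹ x h).trace.re := by
  have integral_w := integral_re_trace_doubleOperator hx.1 (fun _ ha _ hb =>
    integrableOn_inv_segment (pos_of_mem_spectrum hx ha) (pos_of_mem_spectrum hx hb)) k h
  have dslope_eq := doubleOperator_congr (fun _ ha _ hb =>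
    integral_inv_segment (pos_of_mem_spectrum hx ha) (pos_of_mem_spectrum hx hb)) h
  rw [hD.log_apply_eq_doubleOperator hx, ← dslope_eq]
  exact integral_w.symm

theorem trace_fderiv_log_jointly_convex_general
    (Dlog : Matrix m m ℂ → (Matrix m m ℂ →L[ℂ] Matrix m m ℂ))
    (hD : ∀ x : Matrix m m ℂ, x.PosDef → IsFDerivMatFun Real.log x (Dlog x)) :
    ConvexOn ℝ {q : Matrix m m ℂ × Matrix m m ℂ | q.1.PosDef}
      (fun q => (Matrix.trace (q.2ᴴ * (Dlog q.1) q.2)).re) := by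
  have convexOn_integrand : ∀ᵐ s ∂volume.restrict (Set.Ioc (0 : ℝ) 1),
      ConvexOn ℝ {q : Matrix m m ℂ × Matrix m m ℂ | q.1.PosDef} (fun q =>
        (q.2ᴴ * doubleOperator (fun a b => (1 - s) * a + s * b)⁻¹ q.1 q.2).trace.re) :=
    ae_restrict_of_forall_mem measurableSet_Ioc fun s hs =>
      convexOn_re_trace_doubleOperator_inv (sub_nonneg.mpr hs.2) hs.1.le (by simp)
  exact (integral_convexOn_of_integrand_ae convex_setOf_posDef_fst convexOn_integrand
      fun q hq => integrableOn_re_trace_doubleOperator_inv hq q.2 q.2).congr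
    fun q hq => ((hD q.1 hq).re_trace_log_apply_eq_integral hq q.2 q.2).symm

end IntegralRepresentation

/-- **Lieb.** For every `n`, the map `(x, h) ↦ Tr (h* ⬝ D log(x) h)` is jointly
convex in pairs `(x, h)` of an `n × n` positive definite matrix `x` and an arbitrary matrix `h`,
where `D log(x)` is the Fréchet differential of the matrix logarithm at `x`. -/
theorem trace_fderiv_log_jointly_convex (n : ℕ)
    (Dlog : Matrix (Fin n) (Fin n) ℂ → (Matrix (Fin n) (Fin n) ℂ →L[ℂ] Matrix (Fin n) (Fin n) ℂ))
    (hD : ∀ x : Matrix (Fin n) (Fin n) ℂ, x.PosDef → IsFDerivMatFun Real.log x (Dlog x)) :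
    ConvexOn ℝ {q : Matrix (Fin n) (Fin n) ℂ × Matrix (Fin n) (Fin n) ℂ | q.1.PosDef}
      (fun q => (Matrix.trace (q.2ᴴ * (Dlog q.1) q.2)).re) :=
  trace_fderiv_log_jointly_convex_general Dlog hD
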